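/- Let α ≥ 0 be real, let δ > 0 be real, let n ∈ ℕ (n ≥ 0), and let t ∈ (0, π]. Then F_n^{(α,0),δ}(t) = 2^{2α+δ+1} a_n^α F_{2n}^{(α,α),δ}(t/2), where a_n^α = (2n)! (α+1/2)_n / (n! (α+1/2)_{2n}) and (a)_m = a(a+1)···(a+m-1) is the Pochhammer symbol. -/

import Mathlib

open MeasureTheory Real Set

/-- Generalized binomial coefficient `C(u, v) = Γ(u+1) / (Γ(v+1) Γ(u-v+1))`. -/
noncomputable def genBinom (u v : ℝ) : ℝ :=
  Real.Gamma (u + 1) / (Real.Gamma (v + 1) * Real.Gamma (u - v + 1))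

/-- Jacobi polynomial `P_n^{(a,b)}(x)`. -/
noncomputable def jacobiP (n : ℕ) (a b x : ℝ) : ℝ :=
  ∑ k ∈ Finset.range (n + 1),
    genBinom ((n : ℝ) + a) ((n : ℝ) - (k : ℝ)) * genBinom ((n : ℝ) + b) (k : ℝ) *
      ((x - 1) / 2) ^ k * ((x + 1) / 2) ^ (n - k)

/-- `F_n^{(α,β),δ}(t)`. -/
noncomputable def FJ (n : ℕ) (α β δ t : ℝ) : ℝ :=
  ∫ θ in (0:ℝ)..t, (t - θ) ^ δ * jacobiP n (α - 1/2) (β - 1/2) (Real.cos θ) *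
    (Real.sin (θ / 2)) ^ (2 * α) * (Real.cos (θ / 2)) ^ (2 * β)

/-- Pochhammer symbol `(a)_m = a (a+1) ⋯ (a+m-1)`. -/
noncomputable def poch (a : ℝ) (m : ℕ) : ℝ := Polynomial.eval a (ascPochhammer ℝ m)

theorem poch_gamma (a : ℝ) (ha : 0 < a) (m : ℕ) :
    poch a m * Real.Gamma a = Real.Gamma (a + m) := by
  unfold poch
  induction m with
  | zero => simp
  | succ m ih =>
    rw [ascPochhammer_succ_eval]
    push_cast
    rw [← add_assoc, Real.Gamma_add_one (by positivity), ← ih]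
    ring

theorem half_gamma (m : ℕ) :
    Real.Gamma (m + 1/2) * 4 ^ m * (m.factorial : ℝ) = √π * ((2 * m).factorial : ℝ) := by
  induction m with
  | zero => simpa using Real.Gamma_one_half_eq
  | succ m ih =>
    have e : ((m + 1 : ℕ) : ℝ) + 1/2 = (m + 1/2 : ℝ) + 1 := by push_cast; ring
    rw [e, Real.Gamma_add_one (by positivity)]
    rw [show 2 * (m + 1) = (2 * m + 1) + 1 by ring, Nat.factorial_succ, Nat.factorial_succ,
      Nat.factorial_succ]
    push_cast
    linear_combination (4 * (m + 1/2) * (m + 1) : ℝ) * ih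

theorem choose_gamma (u : ℝ) (k : ℕ) (h : 0 < u - k + 1) :
    Ring.choose u k = Real.Gamma (u + 1) / ((k.factorial : ℝ) * Real.Gamma (u - k + 1)) := by
  have h1 := Ring.descPochhammer_eq_factorial_smul_choose u k
  rw [Polynomial.descPochhammer_smeval_eq_ascPochhammer,
    Polynomial.ascPochhammer_smeval_eq_eval] at h1
  have h2 := poch_gamma (u - k + 1) h k
  unfold poch at h2
  rw [h1, show u - k + 1 + k = u + 1 by ring, nsmul_eq_mul] at h2
  have := (Real.Gamma_pos_of_pos h).ne'
  have : (k.factorial : ℝ) ≠ 0 := by positivity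
  rw [eq_div_iff (by positivity), ← h2]
  ring

theorem vand (a : ℝ) (ha : -1 < a) (j m : ℕ) :
    ∑ k ∈ Finset.range (j + 1), (if k ≤ m then
      1 / (Real.Gamma (a + k + 1) * k.factorial * (j - k).factorial * (m - k).factorial) else 0)
    = Real.Gamma (j + m + a + 1) /
      (m.factorial * j.factorial * Real.Gamma (a + j + 1) * Real.Gamma (a + m + 1)) := by
  have hp : ∀ k : ℕ, 0 < Real.Gamma (a + k + 1) := fun k => by
    apply Real.Gamma_pos_of_pos
    have : (0:ℝ) ≤ k := by positivity
    linarith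
  have h := Ring.add_choose_eq (r := (m : ℝ)) (s := a + j) j (Commute.all _ _)
  rw [Finset.Nat.sum_antidiagonal_eq_sum_range_succ_mk, choose_gamma _ _ (by
    have : (0:ℝ) ≤ m := by positivity
    linarith)] at h
  have h2 : Real.Gamma (j + m + a + 1) /
      (m.factorial * j.factorial * Real.Gamma (a + j + 1) * Real.Gamma (a + m + 1))
      = (Real.Gamma (m + (a + j) + 1) / (j.factorial * Real.Gamma (m + (a + j) - j + 1))) /
        (m.factorial * Real.Gamma (a + j + 1)) := by
    rw [show (m + (a + j) - j + 1 : ℝ) = a + m + 1 by ring,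
      show (m + (a + j) + 1 : ℝ) = j + m + a + 1 by ring]
    have := (hp j).ne'
    have := (hp m).ne'
    field_simp
  rw [h2, h, Finset.sum_div]
  refine Finset.sum_congr rfl fun k hk => ?_
  have hk : k ≤ j := by simpa [Nat.lt_succ_iff] using hk
  simp only
  rw [Ring.choose_natCast]
  split_ifs with hm
  · rw [choose_gamma _ _ (by
      rw [Nat.cast_sub hk]
      have : (0:ℝ) ≤ k := by positivity
      linarith), Nat.cast_sub hk, show (a + j - (j - k) + 1 : ℝ) = a + k + 1 by ring,
      Nat.cast_choose ℝ hm]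
    have := (hp j).ne'
    have := (hp k).ne'
    field_simp
  · rw [Nat.choose_eq_zero_of_lt (by omega)]
    simp

theorem binom_expand (u v : ℝ) (n k : ℕ) (hk : k ≤ n) :
    (u * v) ^ k * (u + v) ^ (2 * (n - k)) =
      ∑ j ∈ Finset.range (2 * n + 1), (if k ≤ j ∧ k ≤ 2 * n - j then
        ((2 * (n - k)).factorial : ℝ) / ((j - k).factorial * (2 * n - j - k).factorial) else 0)
        * u ^ j * v ^ (2 * n - j) := by
  have e : 2 * n + 1 = k + ((2 * (n - k) + 1) + k) := by omega
  rw [e, Finset.sum_range_add, Finset.sum_range_add, add_pow, Finset.mul_sum]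
  rw [Finset.sum_eq_zero (s := Finset.range k), zero_add]
  · rw [Finset.sum_eq_zero (s := Finset.range k), add_zero]
    · refine Finset.sum_congr rfl fun i hi => ?_
      have hi : i ≤ 2 * (n - k) := by simpa [Nat.lt_succ_iff] using hi
      rw [if_pos (by omega), Nat.cast_choose ℝ hi, show k + i - k = i by omega,
        show 2 * n - (k + i) = k + (2 * (n - k) - i) by omega,
        show k + (2 * (n - k) - i) - k = 2 * (n - k) - i by omega]
      ring
    · intro x hx
      rw [if_neg (by rw [Finset.mem_range] at hx; omega)]
      ring
  · intro x hx
    rw [if_neg (by rw [Finset.mem_range] at hx; omega)]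
    ring

theorem coef_sum (a : ℝ) (ha : -1 < a) (n j : ℕ) (hj : j ≤ 2 * n) :
    ∑ k ∈ Finset.range (n + 1), (if k ≤ j ∧ k ≤ 2 * n - j then
      1 / (Real.Gamma (a + k + 1) * k.factorial * (j - k).factorial * (2 * n - j - k).factorial)
      else 0)
    = Real.Gamma (2 * n + a + 1) /
      ((2 * n - j).factorial * j.factorial * Real.Gamma (a + j + 1) *
        Real.Gamma (2 * n - j + a + 1)) := by
  have h := vand a ha j (2 * n - j)
  rw [Nat.cast_sub hj] at h
  push_cast at h
  rw [show (j + (2 * n - j) + a + 1 : ℝ) = 2 * n + a + 1 by ring,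
    show (a + (2 * n - j) + 1 : ℝ) = 2 * n - j + a + 1 by ring] at h
  rw [← h]
  trans ∑ k ∈ Finset.range (2 * n + 1), (if k ≤ j ∧ k ≤ 2 * n - j then
      1 / (Real.Gamma (a + k + 1) * k.factorial * (j - k).factorial * (2 * n - j - k).factorial)
      else 0)
  · apply Finset.sum_subset
    · intro x; simp only [Finset.mem_range]; omega
    · intro x _ hx
      rw [Finset.mem_range] at hx
      rw [if_neg (by omega)]
  · symm
    trans ∑ k ∈ Finset.range (j + 1), (if k ≤ j ∧ k ≤ 2 * n - j then
      1 / (Real.Gamma (a + k + 1) * k.factorial * (j - k).factorial * (2 * n - j - k).factorial)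
      else 0)
    · refine Finset.sum_congr rfl fun k hk => ?_
      rw [Finset.mem_range] at hk
      have : k ≤ j := by omega
      simp [this]
    apply Finset.sum_subset
    · intro x; simp only [Finset.mem_range]; omega
    · intro x _ hx
      rw [Finset.mem_range] at hx
      rw [if_neg (by omega)]

theorem jacobi_quad (a : ℝ) (ha : -1 < a) (n : ℕ) (x : ℝ) :
    jacobiP n a (-1/2) (2 * x ^ 2 - 1) =
      (((2 * n).factorial : ℝ) * Real.Gamma (n + a + 1) /
        ((n.factorial : ℝ) * Real.Gamma (2 * n + a + 1))) * jacobiP (2 * n) a a x := by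
  have hp : ∀ k : ℕ, 0 < Real.Gamma (a + k + 1) := fun k => by
    apply Real.Gamma_pos_of_pos
    have : (0:ℝ) ≤ k := by positivity
    linarith
  set u := (x - 1) / 2 with hu
  set v := (x + 1) / 2 with hv
  set A := Real.Gamma (n + a + 1) with hA
  have key : jacobiP n a (-1/2) (2 * x ^ 2 - 1) = ∑ k ∈ Finset.range (n + 1),
      A * (2 * n).factorial / n.factorial *
        (1 / (Real.Gamma (a + k + 1) * k.factorial * (2 * (n - k)).factorial)) *
        ((u * v) ^ k * (u + v) ^ (2 * (n - k))) := by
    unfold jacobiP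
    refine Finset.sum_congr rfl fun k hk => ?_
    have hk : k ≤ n := by simpa [Nat.lt_succ_iff] using hk
    rw [show (2 * x ^ 2 - 1 - 1) / 2 = 4 * (u * v) by rw [hu, hv]; ring,
      show (2 * x ^ 2 - 1 + 1) / 2 = (u + v) ^ 2 by rw [hu, hv]; ring]
    unfold genBinom
    rw [show (n + a - (n - k) + 1 : ℝ) = a + k + 1 by ring, ← Nat.cast_sub hk,
      Real.Gamma_nat_eq_factorial, Real.Gamma_nat_eq_factorial,
      show (n + -1/2 - k + 1 : ℝ) = ((n - k : ℕ) : ℝ) + 1/2 by rw [Nat.cast_sub hk]; ring,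
      show (n + -1/2 + 1 : ℝ) = n + 1/2 by ring, ← hA]
    have g1 := half_gamma n
    have g2 := half_gamma (n - k)
    have p1 : 0 < Real.Gamma (((n - k : ℕ) : ℝ) + 1/2) := Real.Gamma_pos_of_pos (by positivity)
    have p2 := hp k
    have g3 : Real.Gamma (n + 1/2) = √π * ((2 * n).factorial : ℝ) / (4 ^ n * n.factorial) := by
      rw [eq_div_iff (by positivity), ← g1]; ring
    have g4 : Real.Gamma (((n - k : ℕ) : ℝ) + 1/2)
        = √π * ((2 * (n - k)).factorial : ℝ) / (4 ^ (n - k) * (n - k).factorial) := by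
      rw [eq_div_iff (by positivity), ← g2]; ring
    rw [g3, g4, mul_pow 4, ← pow_mul]
    have e4 : (4:ℝ) ^ n = 4 ^ (n - k) * 4 ^ k := by rw [← pow_add]; congr 1; omega
    have : √π ≠ 0 := by positivity
    rw [e4]
    field_simp
  have key2 : jacobiP (2 * n) a a x = ∑ j ∈ Finset.range (2 * n + 1),
      Real.Gamma (2 * n + a + 1) * (Real.Gamma (2 * n + a + 1) /
      ((2 * n - j).factorial * j.factorial * Real.Gamma (a + j + 1) *
        Real.Gamma (2 * n - j + a + 1))) * u ^ j * v ^ (2 * n - j) := by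
    unfold jacobiP
    refine Finset.sum_congr rfl fun j hj => ?_
    have hj : j ≤ 2 * n := by simpa [Nat.lt_succ_iff] using hj
    unfold genBinom
    rw [← hu, ← hv, ← Nat.cast_sub hj, Real.Gamma_nat_eq_factorial, Real.Gamma_nat_eq_factorial,
      Nat.cast_sub hj]
    push_cast
    rw [show (2 * n + a - (2 * n - j) + 1 : ℝ) = a + j + 1 by ring,
      show (2 * n + a - j + 1 : ℝ) = 2 * n - j + a + 1 by ring]
    have q1 := hp j
    have q2 : 0 < Real.Gamma (2 * n - j + a + 1) := by
      have := hp (2 * n - j)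
      rw [Nat.cast_sub hj] at this
      push_cast at this
      convert this using 2
      ring
    field_simp
  rw [key, key2, Finset.mul_sum]
  have hG : 0 < Real.Gamma (2 * n + a + 1) := by
    have := hp (2 * n)
    push_cast at this
    convert this using 2
    ring
  trans ∑ k ∈ Finset.range (n + 1), ∑ j ∈ Finset.range (2 * n + 1),
      A * (2 * n).factorial / n.factorial * (if k ≤ j ∧ k ≤ 2 * n - j then
      1 / (Real.Gamma (a + k + 1) * k.factorial * (j - k).factorial * (2 * n - j - k).factorial)
      else 0) * u ^ j * v ^ (2 * n - j)
  · refine Finset.sum_congr rfl fun k hk => ?_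
    have hk : k ≤ n := by simpa [Nat.lt_succ_iff] using hk
    rw [binom_expand u v n k hk, Finset.mul_sum]
    refine Finset.sum_congr rfl fun j hj => ?_
    have p2 := hp k
    split_ifs
    · field_simp
    · ring
  rw [Finset.sum_comm]
  refine Finset.sum_congr rfl fun j hj => ?_
  have hj : j ≤ 2 * n := by simpa [Nat.lt_succ_iff] using hj
  rw [← coef_sum a ha n j hj, ← Finset.sum_mul, ← Finset.sum_mul, ← Finset.mul_sum]
  field_simp

theorem FJ_quadratic_transform (α : ℝ) (hα : 0 ≤ α) (δ : ℝ) (hδ : 0 < δ) (n : ℕ)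
    (t : ℝ) (ht : t ∈ Set.Ioc (0:ℝ) π) :
    FJ n α 0 δ t =
      (2:ℝ) ^ (2 * α + δ + 1) *
        ((Nat.factorial (2 * n) : ℝ) * poch (α + 1/2) n /
          ((Nat.factorial n : ℝ) * poch (α + 1/2) (2 * n))) *
        FJ (2 * n) α α δ (t / 2) := by
  obtain ⟨ht0, htp⟩ := ht
  have hs : FJ n α 0 δ t = 2 * ∫ φ in (0:ℝ)..(t / 2), (t - 2 * φ) ^ δ *
      jacobiP n (α - 1/2) (0 - 1/2) (Real.cos (2 * φ)) *
      (Real.sin (2 * φ / 2)) ^ (2 * α) * (Real.cos (2 * φ / 2)) ^ (2 * (0:ℝ)) := by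
    unfold FJ
    have := intervalIntegral.mul_integral_comp_mul_left (a := 0) (b := t / 2) (c := (2:ℝ))
      (f := fun θ : ℝ => (t - θ) ^ δ * jacobiP n (α - 1/2) (0 - 1/2) (Real.cos θ) *
        (Real.sin (θ / 2)) ^ (2 * α) * (Real.cos (θ / 2)) ^ (2 * (0:ℝ)))
    rw [this]
    congr 1 <;> ring
  rw [hs]
  unfold FJ
  rw [← intervalIntegral.integral_const_mul, ← intervalIntegral.integral_const_mul]
  apply intervalIntegral.integral_congr
  intro φ hφ
  rw [Set.uIcc_of_le (by linarith)] at hφ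
  obtain ⟨h0, h1⟩ := hφ
  have hj := jacobi_quad (α - 1/2) (by linarith) n (Real.cos φ)
  have p1 := poch_gamma (α + 1/2) (by linarith) n
  have p2 := poch_gamma (α + 1/2) (by linarith) (2 * n)
  have hg : 0 < Real.Gamma (α + 1/2) := Real.Gamma_pos_of_pos (by linarith)
  have hg2 : 0 < Real.Gamma (α + 1/2 + (2 * n : ℕ)) := Real.Gamma_pos_of_pos (by positivity)
  have hq : poch (α + 1/2) (2 * n) ≠ 0 := by
    intro h
    rw [h, zero_mul] at p2
    exact hg2.ne p2
  have hc : (Nat.factorial (2 * n) : ℝ) * poch (α + 1/2) n /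
          ((Nat.factorial n : ℝ) * poch (α + 1/2) (2 * n)) =
      ((2 * n).factorial : ℝ) * Real.Gamma (n + (α - 1/2) + 1) /
        ((n.factorial : ℝ) * Real.Gamma (2 * n + (α - 1/2) + 1)) := by
    rw [show (n + (α - 1/2) + 1 : ℝ) = α + 1/2 + n by ring,
      show (2 * n + (α - 1/2) + 1 : ℝ) = α + 1/2 + (2 * n : ℕ) by push_cast; ring, ← p1, ← p2]
    field_simp
  have hsin : 0 ≤ Real.sin (φ / 2) := Real.sin_nonneg_of_nonneg_of_le_pi (by linarith) (by linarith)
  have hcos : 0 ≤ Real.cos (φ / 2) := Real.cos_nonneg_of_neg_pi_div_two_le_of_le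
    (by linarith) (by linarith)
  have e1 : Real.sin φ ^ (2 * α) =
      2 ^ (2 * α) * Real.sin (φ / 2) ^ (2 * α) * Real.cos (φ / 2) ^ (2 * α) := by
    rw [← Real.mul_rpow (by norm_num) hsin, ← Real.mul_rpow (by positivity) hcos,
      ← Real.sin_two_mul]
    congr 2
    ring
  have e2 : (t - 2 * φ) ^ δ = 2 ^ δ * (t / 2 - φ) ^ δ := by
    rw [← Real.mul_rpow (by norm_num) (by linarith)]
    congr 1
    ring
  simp only
  rw [hc, show 2 * φ / 2 = φ by ring, mul_zero, Real.rpow_zero, e1, e2, Real.cos_two_mul,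
    show (0 - 1/2 : ℝ) = -1/2 by norm_num, hj, Real.rpow_add (by norm_num),
    Real.rpow_add (by norm_num), Real.rpow_one]
  ring
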